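/- arXiv:2605.26846 — 8 statements merged into one kernel-verified Lean document; each statement's English description precedes it below -/
import Mathlib

section
/- For every integer M ≥ 1 and every real x, ∑_{k=0}^{M} (−1)^{M−k} P_{2k}(2M, M+1/2) x^{2M−2k} = P_{2M}(2M, M+1/2) · ∏_{r=1}^{M} (1 + 4x²/(2r−1)²). (This is the real form of the identity ∑_{k=0}^{M} P_{2k}(2M, M+1/2)(ix)^{2M−2k} = P_{2M}(2M, M+1/2) ∏_{r=1}^{M}(1 + 4x²/(2r−1)²), using (ix)^{2M−2k} = (−1)^{M−k} x^{2M−2k}.) -/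
/-!
Put `a i = i + 1 - (M + 1/2)` for `i < 2M`. Expanding `∏ (y + a i)` in elementary symmetric
functions at `y = x * I` and taking real parts leaves exactly the terms of even index, which are
the left-hand side (`coe_prod_re`). On the other hand, the `a i` come in pairs `± (r + 1/2)`, so the
same product equals `∏ (y² - (r + 1/2)²)` (`prod_pairing`); comparing with the case `y = 0`, which
is `P (2M) (2M)`, yields the factors `1 + 4x² / (2r+1)²`.
-/

/-- Signed generalized Stirling polynomial `P_k(m,x) = (-1)^k e_k(1-x, 2-x, …, m-x)`,
with `P_k(m,x) = 0` for `k < 0` or `k > m`. -/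
noncomputable def P (m : ℕ) (k : ℤ) (x : ℝ) : ℝ :=
  if 0 ≤ k then
    (-1 : ℝ) ^ k.toNat *
      ∑ S ∈ (Finset.range m).powersetCard k.toNat, ∏ i ∈ S, ((i : ℝ) + 1 - x)
  else 0

/-- Vieta expansion of `∏ (y + a i)`, with the coefficients written as sums over subsets. -/
lemma prod_add_eq_sum_powersetCard {R : Type*} [CommRing R] (n : ℕ) (a : ℕ → R) (y : R) :
    ∏ i ∈ Finset.range n, (a i + y) =
      ∑ k ∈ Finset.range (n + 1),
        (∑ S ∈ (Finset.range n).powersetCard k, ∏ i ∈ S, a i) * y ^ (n - k) := by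
  rw [Finset.prod_add, Finset.sum_powerset, Finset.card_range]
  refine Finset.sum_congr rfl fun k _ => ?_
  rw [Finset.sum_mul]
  refine Finset.sum_congr rfl fun S hS => ?_
  obtain ⟨hS, hc⟩ := Finset.mem_powersetCard.1 hS
  rw [Finset.prod_const, Finset.card_sdiff_of_subset hS, Finset.card_range, hc]

lemma sum_range_even_odd {R : Type*} [AddCommMonoid R] (f : ℕ → R) (M : ℕ) :
    ∑ k ∈ Finset.range (2 * M + 1), f k =
      ∑ k ∈ Finset.range (M + 1), f (2 * k) + ∑ k ∈ Finset.range M, f (2 * k + 1) := by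
  induction M with
  | zero => simp
  | succ M ih =>
    rw [show 2 * (M + 1) + 1 = 2 * M + 1 + 1 + 1 by ring, Finset.sum_range_succ,
      Finset.sum_range_succ, ih, Finset.sum_range_succ _ (M + 1),
      Finset.sum_range_succ (fun k => f (2 * k + 1)) M,
      show 2 * (M + 1) = 2 * M + 2 by ring]
    abel

/-- The shifts `i + 1 - (M + 1/2)`, `i < 2M`, are `± (r + 1/2)`, `r < M`. -/
lemma prod_pairing {K : Type*} [Field K] [CharZero K] (M : ℕ) (y : K) :
    ∏ i ∈ Finset.range (2 * M), (((i : K) + 1 - ((M : K) + 1 / 2)) + y) =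
      ∏ r ∈ Finset.range M, (y ^ 2 - ((r : K) + 1 / 2) ^ 2) := by
  rw [two_mul, Finset.prod_range_add, ← Finset.prod_range_reflect, ← Finset.prod_mul_distrib]
  refine Finset.prod_congr rfl fun r hr => ?_
  have h : r + 1 ≤ M := Finset.mem_range.1 hr
  have h' : M - 1 - r = M - (r + 1) := by omega
  rw [h', Nat.cast_sub h]
  push_cast
  ring

lemma P_natCast (m k : ℕ) (x : ℝ) :
    P m (k : ℤ) x = (-1 : ℝ) ^ k *
      ∑ S ∈ (Finset.range m).powersetCard k, ∏ i ∈ S, ((i : ℝ) + 1 - x) := by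
  simp [P]

/-- The even-index part of the Vieta expansion at `y = x * I` is its real part. -/
lemma coe_prod_re (M : ℕ) (x : ℝ) :
    (∏ i ∈ Finset.range (2 * M),
      ((((i : ℝ) + 1 - ((M : ℝ) + 1 / 2) : ℝ) : ℂ) + x * Complex.I)).re =
    ∑ k ∈ Finset.range (M + 1),
      (-1 : ℝ) ^ (M - k) * P (2 * M) ((2 * k : ℕ) : ℤ) ((M : ℝ) + 1 / 2) *
        x ^ (2 * M - 2 * k) := by
  rw [prod_add_eq_sum_powersetCard, sum_range_even_odd, Complex.add_re, Complex.re_sum,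
    Complex.re_sum]
  have hI : ∀ j : ℕ, ((x : ℂ) * Complex.I) ^ (2 * j) = (((-1) ^ j * x ^ (2 * j) : ℝ) : ℂ) := by
    intro j
    rw [mul_pow, pow_mul Complex.I, Complex.I_sq]
    push_cast
    ring
  have hodd : ∑ k ∈ Finset.range M,
      ((∑ S ∈ (Finset.range (2 * M)).powersetCard (2 * k + 1),
        ∏ i ∈ S, (((i : ℝ) + 1 - ((M : ℝ) + 1 / 2) : ℝ) : ℂ)) *
          ((x : ℂ) * Complex.I) ^ (2 * M - (2 * k + 1))).re = 0 := by
    refine Finset.sum_eq_zero fun k hk => ?_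
    have hk' := Finset.mem_range.1 hk
    rw [show 2 * M - (2 * k + 1) = 2 * (M - k - 1) + 1 by omega, pow_succ, hI]
    simp only [← Complex.ofReal_prod, ← Complex.ofReal_sum]
    rw [Complex.re_ofReal_mul, Complex.re_ofReal_mul]
    simp
  rw [hodd, add_zero]
  refine Finset.sum_congr rfl fun k _ => ?_
  rw [← Nat.mul_sub, hI, P_natCast, (even_two_mul k).neg_one_pow]
  simp only [← Complex.ofReal_prod, ← Complex.ofReal_sum]
  rw [Complex.re_ofReal_mul, Complex.ofReal_re]
  ring

/-- Finite cosh product identity (real form). -/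
theorem finite_cosh_product (M : ℕ) (hM : 1 ≤ M) (x : ℝ) :
    ∑ k ∈ Finset.range (M + 1),
        (-1 : ℝ) ^ (M - k) * P (2 * M) ((2 * k : ℕ) : ℤ) ((M : ℝ) + 1 / 2) * x ^ (2 * M - 2 * k)
      = P (2 * M) ((2 * M : ℕ) : ℤ) ((M : ℝ) + 1 / 2) *
          ∏ r ∈ Finset.range M, (1 + 4 * x ^ 2 / (2 * (r : ℝ) + 1) ^ 2) := by
  -- The top coefficient is the product of all the shifts, i.e. the case `y = 0` of the pairing.
  have htop : P (2 * M) ((2 * M : ℕ) : ℤ) ((M : ℝ) + 1 / 2) =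
      ∏ r ∈ Finset.range M, ((0 : ℝ) ^ 2 - ((r : ℝ) + 1 / 2) ^ 2) := by
    rw [← prod_pairing, P_natCast, (even_two_mul M).neg_one_pow]
    have h := Finset.powersetCard_self (Finset.range (2 * M))
    rw [Finset.card_range] at h
    simp [h]
  have hprod : ∏ i ∈ Finset.range (2 * M),
      ((((i : ℝ) + 1 - ((M : ℝ) + 1 / 2) : ℝ) : ℂ) + x * Complex.I) =
      ((∏ r ∈ Finset.range M, (-x ^ 2 - ((r : ℝ) + 1 / 2) ^ 2) : ℝ) : ℂ) := by
    have h := prod_pairing M ((x : ℂ) * Complex.I)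
    rw [mul_pow, Complex.I_sq] at h
    push_cast
    rw [h]
    refine Finset.prod_congr rfl fun r _ => ?_
    ring
  rw [← coe_prod_re, hprod, Complex.ofReal_re, htop, ← Finset.prod_mul_distrib]
  refine Finset.prod_congr rfl fun r _ => ?_
  have h : (2 * (r : ℝ) + 1) ≠ 0 := by positivity
  field_simp
  ring
end

section
/- For every fixed integer s ≥ 1, the sequence M ↦ (−1)^s · P_{2M−2s}(2M, M+1/2) / P_{2M}(2M, M+1/2) (defined for M ≥ s) converges to π^{2s}/(2s)! as M → ∞. In particular, −2·P_{2M−2}(2M, M+1/2)/P_{2M}(2M, M+1/2) converges to π² as M → ∞. -/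
open Filter

open Polynomial in
/-- The polynomial `∏_{j < M} (1 + t / (j + 1/2)²)` in `t`; at `t = -y²` it is the `M`-th partial
product of Euler's product for `cos (π y)`. -/
noncomputable def cosPoly (M : ℕ) : Polynomial ℝ :=
  ∏ j ∈ Finset.range M, (1 + C (1 / ((j : ℝ) + 1 / 2) ^ 2) * X)

lemma cosPoly_coeff_zero (M : ℕ) : (cosPoly M).coeff 0 = 1 := by
  simp [cosPoly, Polynomial.coeff_zero_eq_eval_zero, Polynomial.eval_prod]

lemma cosPoly_coeff_succ (M k : ℕ) : (cosPoly (M + 1)).coeff (k + 1) =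
    (cosPoly M).coeff (k + 1) + 1 / ((M : ℝ) + 1 / 2) ^ 2 * (cosPoly M).coeff k := by
  rw [cosPoly, Finset.prod_range_succ, ← cosPoly, mul_add, mul_one, Polynomial.coeff_add,
    ← mul_assoc, Polynomial.coeff_mul_X, Polynomial.coeff_mul_C, mul_comm (Polynomial.coeff _ k)]

lemma cosPoly_coeff_nonneg (M k : ℕ) : 0 ≤ (cosPoly M).coeff k := by
  induction M generalizing k with
  | zero => simp only [cosPoly, Finset.range_zero, Finset.prod_empty, Polynomial.coeff_one]
            split_ifs <;> norm_num
  | succ M ih =>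
    cases k with
    | zero => simp [cosPoly_coeff_zero]
    | succ k =>
      rw [cosPoly_coeff_succ]
      have := ih k
      have := ih (k + 1)
      positivity

lemma cosPoly_coeff_mono (k : ℕ) : Monotone fun M => (cosPoly M).coeff k := by
  refine monotone_nat_of_le_succ fun M => ?_
  cases k with
  | zero => simp [cosPoly_coeff_zero]
  | succ k =>
    rw [cosPoly_coeff_succ]
    have := cosPoly_coeff_nonneg M k
    have : 0 ≤ 1 / ((M : ℝ) + 1 / 2) ^ 2 * (cosPoly M).coeff k := by positivity
    linarith

lemma summable_cos_coeffs : Summable fun j : ℕ => 1 / ((j : ℝ) + 1 / 2) ^ 2 := by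
  have := (Real.summable_one_div_nat_add_rpow (1 / 2) 2).2 (by norm_num)
  refine this.congr fun j => ?_
  norm_cast
  rw [sq_abs]

/-- A coefficient is at most the value at `1`, and `1 + a ≤ exp a` bounds that value by
`exp (∑ 1 / (j + 1/2)²)`. -/
lemma cosPoly_coeff_bound : ∃ B : ℝ, ∀ M k, (cosPoly M).coeff k ≤ B := by
  refine ⟨Real.exp (∑' j : ℕ, 1 / ((j : ℝ) + 1 / 2) ^ 2), fun M k => ?_⟩
  calc (cosPoly M).coeff k ≤ (cosPoly M).eval 1 := by
        rw [Polynomial.eval_eq_sum_range]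
        simp only [one_pow, mul_one]
        by_cases hk : k ∈ Finset.range ((cosPoly M).natDegree + 1)
        · exact Finset.single_le_sum (f := fun i => (cosPoly M).coeff i)
            (fun i _ => cosPoly_coeff_nonneg M i) hk
        · rw [Polynomial.coeff_eq_zero_of_natDegree_lt (by simp at hk; omega)]
          exact Finset.sum_nonneg fun i _ => cosPoly_coeff_nonneg M i
    _ = ∏ j ∈ Finset.range M, (1 + 1 / ((j : ℝ) + 1 / 2) ^ 2) := by
        simp [cosPoly, Polynomial.eval_prod]
    _ ≤ ∏ j ∈ Finset.range M, Real.exp (1 / ((j : ℝ) + 1 / 2) ^ 2) := by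
        refine Finset.prod_le_prod (fun j _ => by positivity) fun j _ => ?_
        rw [add_comm]
        exact Real.add_one_le_exp _
    _ = Real.exp (∑ j ∈ Finset.range M, 1 / ((j : ℝ) + 1 / 2) ^ 2) := (Real.exp_sum _ _).symm
    _ ≤ _ := Real.exp_le_exp.2 (summable_cos_coeffs.sum_le_tsum _ fun j _ => by positivity)

lemma prod_split (x : ℂ) (M : ℕ) :
    ∏ j ∈ Finset.range (2 * M), (1 - (2 * x) ^ 2 / ((j : ℂ) + 1) ^ 2) =
      (∏ j ∈ Finset.range M, (1 - x ^ 2 / ((j : ℂ) + 1) ^ 2)) *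
        ∏ j ∈ Finset.range M, (1 - x ^ 2 / ((j : ℂ) + 1 / 2) ^ 2) := by
  induction M with
  | zero => simp
  | succ M ih =>
    rw [show 2 * (M + 1) = 2 * M + 1 + 1 by ring, Finset.prod_range_succ, Finset.prod_range_succ,
      ih, Finset.prod_range_succ, Finset.prod_range_succ]
    have h1 : (2 * x) ^ 2 / (((2 * M : ℕ) : ℂ) + 1) ^ 2 = x ^ 2 / ((M : ℂ) + 1 / 2) ^ 2 := by
      rw [← div_pow, ← div_pow, ← mul_div_mul_left x _ (two_ne_zero : (2 : ℂ) ≠ 0)]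
      push_cast
      ring_nf
    have h2 : (2 * x) ^ 2 / (((2 * M + 1 : ℕ) : ℂ) + 1) ^ 2 = x ^ 2 / ((M : ℂ) + 1) ^ 2 := by
      rw [← div_pow, ← div_pow, ← mul_div_mul_left x _ (two_ne_zero : (2 : ℂ) ≠ 0)]
      push_cast
      ring_nf
    rw [h1, h2]
    ring

/-- Euler's product for the cosine, in the range where `sin (π x)` vanishes only at `0`. -/
lemma tendsto_cos_prod {x : ℂ} (hx : ‖x‖ < 1) :
    Tendsto (fun M : ℕ => ∏ j ∈ Finset.range M, (1 - x ^ 2 / ((j : ℂ) + 1 / 2) ^ 2)) atTop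
      (nhds (Complex.cos (Real.pi * x))) := by
  rcases eq_or_ne x 0 with rfl | h0
  · simp
  have hpi : (Real.pi : ℂ) ≠ 0 := by exact_mod_cast Real.pi_ne_zero
  have hsin : Complex.sin (Real.pi * x) ≠ 0 := by
    intro h
    obtain ⟨k, hk⟩ := Complex.sin_eq_zero_iff.1 h
    have hxk : x = k := by
      rw [mul_comm] at hk
      exact mul_right_cancel₀ hpi hk
    rw [hxk, Complex.norm_intCast] at hx
    have : |k| < 1 := by exact_mod_cast hx
    rw [Int.abs_lt_one_iff] at this
    exact h0 (by simp [hxk, this])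
  have hA := Complex.tendsto_euler_sin_prod x
  have hB := (Complex.tendsto_euler_sin_prod (2 * x)).comp
    (tendsto_id.const_mul_atTop' (r := 2) (by norm_num))
  have hlim := hB.div (hA.const_mul 2) (by simpa using hsin)
  have hval : Complex.sin (Real.pi * (2 * x)) / (2 * Complex.sin (Real.pi * x)) =
      Complex.cos (Real.pi * x) := by
    rw [show (Real.pi : ℂ) * (2 * x) = 2 * (Real.pi * x) by ring, Complex.sin_two_mul]
    field_simp
  rw [hval] at hlim
  refine hlim.congr' ?_
  filter_upwards [hA.eventually_ne hsin] with M hM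
  simp only [Function.comp, id, Pi.div_apply]
  rw [prod_split, div_eq_iff (mul_ne_zero two_ne_zero hM)]
  ring

lemma hasSum_cosPoly (M : ℕ) (z : ℂ) :
    HasSum (fun k => ((cosPoly M).coeff k : ℂ) * z ^ k)
      (∏ j ∈ Finset.range M, (1 + z / ((j : ℂ) + 1 / 2) ^ 2)) := by
  have h : ∏ j ∈ Finset.range M, (1 + z / ((j : ℂ) + 1 / 2) ^ 2) =
      ∑ k ∈ Finset.range ((cosPoly M).natDegree + 1), ((cosPoly M).coeff k : ℂ) * z ^ k := by
    have := Polynomial.aeval_eq_sum_range (p := cosPoly M) z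
    simp only [Complex.real_smul] at this
    rw [← this, cosPoly, map_prod]
    refine Finset.prod_congr rfl fun j _ => ?_
    simp
    ring
  rw [h]
  refine hasSum_sum_of_ne_finset_zero fun k hk => ?_
  rw [Polynomial.coeff_eq_zero_of_natDegree_lt (by simp at hk; omega)]
  simp

lemma tendsto_cosPoly_coeff (s : ℕ) :
    Tendsto (fun M => (cosPoly M).coeff s) atTop
      (nhds (Real.pi ^ (2 * s) / (Nat.factorial (2 * s) : ℝ))) := by
  obtain ⟨B, hB⟩ := cosPoly_coeff_bound
  set L : ℕ → ℝ := fun k => ⨆ M, (cosPoly M).coeff k with hL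
  have hlim : ∀ k, Tendsto (fun M => (cosPoly M).coeff k) atTop (nhds (L k)) := fun k =>
    tendsto_atTop_ciSup (cosPoly_coeff_mono k) ⟨B, by rintro _ ⟨M, rfl⟩; exact hB M k⟩
  have hLB : ∀ k, ‖(L k : ℂ)‖ ≤ B := fun k => by
    rw [Complex.norm_real, Real.norm_eq_abs, abs_of_nonneg]
    · exact le_of_tendsto' (hlim k) fun M => hB M k
    · exact ge_of_tendsto' (hlim k) fun M => cosPoly_coeff_nonneg M k
  set D : ℕ → ℂ := fun k => (Real.pi : ℂ) ^ (2 * k) / (Nat.factorial (2 * k) : ℂ) with hD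
  have hdom : ∀ z : ℂ, ‖z‖ < 1 → Summable fun k : ℕ => B * ‖z‖ ^ k := fun z hz =>
    (summable_geometric_of_lt_one (norm_nonneg _) hz).mul_left _
  -- Both series have the same sum on the unit disc; there `z = -x²` with `‖x‖ < 1`.
  have key : ∀ z : ℂ, ‖z‖ < 1 → HasSum (fun k => z ^ k * (L k : ℂ)) (∑' k, z ^ k * D k) ∧
      HasSum (fun k => z ^ k * D k) (∑' k, z ^ k * D k) := by
    intro z hz
    obtain ⟨x, hx⟩ := IsAlgClosed.exists_pow_nat_eq (-z) (n := 2) (by norm_num)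
    have hzx : z = -x ^ 2 := by rw [hx, neg_neg]
    have hx1 : ‖x‖ < 1 := by
      rw [hzx, norm_neg, norm_pow] at hz
      exact (sq_lt_one_iff₀ (norm_nonneg _)).1 hz
    have hcos : HasSum (fun k => z ^ k * D k) (Complex.cos (Real.pi * x)) := by
      refine (Complex.hasSum_cos (Real.pi * x)).congr_fun ?_
      intro k
      simp only [hD]
      rw [hzx, neg_pow, ← pow_mul, mul_pow]
      ring
    have hsum : Summable fun k => (L k : ℂ) * z ^ k :=
      Summable.of_norm_bounded (hdom z hz) fun k => by
        rw [norm_mul, norm_pow]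
        gcongr
        exact hLB k
    have hT := tendsto_tsum_of_dominated_convergence (𝓕 := atTop)
      (f := fun M k => ((cosPoly M).coeff k : ℂ) * z ^ k) (g := fun k => (L k : ℂ) * z ^ k)
      (hdom z hz)
      (fun k => ((Complex.continuous_ofReal.tendsto _).comp (hlim k)).mul_const _)
      (Eventually.of_forall fun M k => by
        rw [norm_mul, norm_pow, Complex.norm_real, Real.norm_eq_abs,
          abs_of_nonneg (cosPoly_coeff_nonneg M k)]
        gcongr
        exact hB M k)
    have hC := tendsto_cos_prod hx1
    have heq : ∑' k, (L k : ℂ) * z ^ k = Complex.cos (Real.pi * x) := by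
      refine tendsto_nhds_unique hT (hC.congr fun M => ?_)
      rw [(hasSum_cosPoly M z).tsum_eq, hzx]
      exact Finset.prod_congr rfl fun j _ => by ring
    rw [hcos.tsum_eq]
    refine ⟨?_, hcos⟩
    rw [← heq]
    simpa only [mul_comm] using hsum.hasSum
  have hball : ∀ᶠ z : ℂ in nhds 0, ‖z‖ < 1 := by
    filter_upwards [Metric.ball_mem_nhds (0 : ℂ) one_pos] with z hz
    simpa using hz
  have h1 : HasFPowerSeriesAt (fun z : ℂ => ∑' k, z ^ k * D k)
      (FormalMultilinearSeries.ofScalars ℂ fun k => (L k : ℂ)) 0 := by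
    rw [hasFPowerSeriesAt_iff]
    filter_upwards [hball] with z hz
    simpa [FormalMultilinearSeries.coeff_ofScalars] using (key z hz).1
  have h2 : HasFPowerSeriesAt (fun z : ℂ => ∑' k, z ^ k * D k)
      (FormalMultilinearSeries.ofScalars ℂ D) 0 := by
    rw [hasFPowerSeriesAt_iff]
    filter_upwards [hball] with z hz
    simpa [FormalMultilinearSeries.coeff_ofScalars] using (key z hz).2
  have h3 := congrArg (fun p => p.coeff s) (h1.eq_formalMultilinearSeries h2)
  simp only [FormalMultilinearSeries.coeff_ofScalars, hD] at h3
  have h4 : L s = Real.pi ^ (2 * s) / (Nat.factorial (2 * s) : ℝ) := by exact_mod_cast h3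
  rw [← h4]
  exact hlim s

open Polynomial in
/-- Pairing the factors `X ± (j + 1/2)`, and then extracting the constant term. -/
lemma prod_eq_cosPoly (M : ℕ) :
    ∏ i ∈ Finset.range (2 * M), (X + C ((i : ℝ) + 1 - ((M : ℝ) + 1 / 2))) =
      C (∏ j ∈ Finset.range M, (-((j : ℝ) + 1 / 2) ^ 2)) *
        expand ℝ 2 ((cosPoly M).comp (C (-1) * X)) := by
  rw [two_mul, Finset.prod_range_add, ← Finset.prod_range_reflect, ← Finset.prod_mul_distrib,
    cosPoly, Polynomial.prod_comp, map_prod, map_prod, ← Finset.prod_mul_distrib]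
  refine Finset.prod_congr rfl fun j hj => ?_
  have hj' : j + 1 ≤ M := Finset.mem_range.1 hj
  have e1 : ((M - 1 - j : ℕ) : ℝ) + 1 - ((M : ℝ) + 1 / 2) = -((j : ℝ) + 1 / 2) := by
    rw [Nat.sub_sub, add_comm 1 j, Nat.cast_sub hj']
    push_cast
    ring
  have e2 : ((M + j : ℕ) : ℝ) + 1 - ((M : ℝ) + 1 / 2) = (j : ℝ) + 1 / 2 := by
    push_cast
    ring
  have hne : ((j : ℝ) + 1 / 2) ^ 2 ≠ 0 := by positivity
  have e3 : C (((j : ℝ) + 1 / 2) ^ 2) * C (1 / ((j : ℝ) + 1 / 2) ^ 2) = 1 := by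
    rw [← C_mul, mul_one_div_cancel hne, C_1]
  rw [e1, e2]
  simp only [add_comp, mul_comp, one_comp, C_comp, X_comp, map_add, map_mul, map_one, expand_C,
    expand_X, map_neg]
  rw [C_pow] at e3
  simp only [map_add, map_pow] at e3 ⊢
  linear_combination (-X ^ 2) * e3

lemma P_eq_coeff {M s : ℕ} (h : s ≤ M) :
    P (2 * M) ((2 * M - 2 * s : ℕ) : ℤ) ((M : ℝ) + 1 / 2) =
      (∏ j ∈ Finset.range M, (-((j : ℝ) + 1 / 2) ^ 2)) * ((cosPoly M).coeff s * (-1) ^ s) := by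
  have hc := Finset.prod_X_add_C_coeff (Finset.range (2 * M))
    (fun i : ℕ => (i : ℝ) + 1 - ((M : ℝ) + 1 / 2)) (k := 2 * s) (by simp; omega)
  rw [prod_eq_cosPoly, Polynomial.coeff_C_mul, mul_comm 2 s,
    Polynomial.coeff_expand_mul (by norm_num), Polynomial.comp_C_mul_X_coeff,
    Finset.card_range, mul_comm s 2] at hc
  have heven : Even (2 * M - 2 * s) := ⟨M - s, by omega⟩
  rw [P, if_pos (Int.natCast_nonneg _), Int.toNat_natCast, heven.neg_one_pow, one_mul, ← hc]

lemma P_ratio {M s : ℕ} (h : s ≤ M) :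
    P (2 * M) ((2 * M - 2 * s : ℕ) : ℤ) ((M : ℝ) + 1 / 2)
      / P (2 * M) ((2 * M : ℕ) : ℤ) ((M : ℝ) + 1 / 2) = (-1) ^ s * (cosPoly M).coeff s := by
  have h0 := P_eq_coeff (Nat.zero_le M)
  simp only [mul_zero, Nat.sub_zero, cosPoly_coeff_zero, pow_zero, mul_one] at h0
  have hne : ∏ j ∈ Finset.range M, (-((j : ℝ) + 1 / 2) ^ 2) ≠ 0 :=
    Finset.prod_ne_zero_iff.2 fun j _ => neg_ne_zero.2 (by positivity)
  rw [h0, P_eq_coeff h, mul_div_cancel_left₀ _ hne, mul_comm]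

/-- Coefficient limits: `(-1)^s P_{2M-2s}(2M,M+1/2)/P_{2M}(2M,M+1/2) → π^{2s}/(2s)!`,
and in particular `-2 P_{2M-2}(2M,M+1/2)/P_{2M}(2M,M+1/2) → π²`. -/
theorem pi_polynomial_limit (s : ℕ) (hs : 1 ≤ s) :
    Tendsto (fun M : ℕ =>
        (-1 : ℝ) ^ s * P (2 * M) ((2 * M - 2 * s : ℕ) : ℤ) ((M : ℝ) + 1 / 2)
          / P (2 * M) ((2 * M : ℕ) : ℤ) ((M : ℝ) + 1 / 2))
      atTop (nhds (Real.pi ^ (2 * s) / (Nat.factorial (2 * s) : ℝ)))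
    ∧ Tendsto (fun M : ℕ =>
        -2 * P (2 * M) ((2 * M - 2 : ℕ) : ℤ) ((M : ℝ) + 1 / 2)
          / P (2 * M) ((2 * M : ℕ) : ℤ) ((M : ℝ) + 1 / 2))
      atTop (nhds (Real.pi ^ 2)) := by
  have main : ∀ s : ℕ, Tendsto (fun M : ℕ =>
      (-1 : ℝ) ^ s * P (2 * M) ((2 * M - 2 * s : ℕ) : ℤ) ((M : ℝ) + 1 / 2)
        / P (2 * M) ((2 * M : ℕ) : ℤ) ((M : ℝ) + 1 / 2))
      atTop (nhds (Real.pi ^ (2 * s) / (Nat.factorial (2 * s) : ℝ))) := by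
    intro s
    refine (tendsto_cosPoly_coeff s).congr' ?_
    filter_upwards [eventually_ge_atTop s] with M hM
    rw [mul_div_assoc, P_ratio hM, ← mul_assoc, ← mul_pow]
    simp
  refine ⟨main s, ?_⟩
  have h1 := (main 1).const_mul 2
  have hv : 2 * (Real.pi ^ (2 * 1) / (Nat.factorial (2 * 1) : ℝ)) = Real.pi ^ 2 := by
    norm_num [Nat.factorial]
    ring
  rw [hv] at h1
  refine h1.congr fun M => ?_
  rw [mul_one]
  ring
end

section
/- For every integer n ≥ 1 and every odd integer h with 1 ≤ h ≤ n−1, the following identity of integers holds: ∑_{r=0}^{h} (−1)^r · 2^{h−r} · n^r · C(n+r−h−1, n−h−1) · ⟦n, n−h+r⟧ = 0, where C(·,·) denotes the binomial coefficient. -/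
/-!
Write `n = N + 1` and `x(x+1)⋯(x+N) = x * Q(x)` with `Q(x) = (x+1)⋯(x+N)`, so that `⟦n, k+1⟧` is the
`k`-th coefficient of `Q`. With `m = n - h - 1`, the sum is `2 ^ h` times the value at `-n/2` of the
`m`-th Hasse derivative of `Q`, i.e. `2 ^ h` times the coefficient of `x ^ m` in `Q(x - n/2)`.
The roots `-1, …, -N` of `Q` are symmetric about `-n/2`, hence `Q(x - n/2)` has the parity of `N`
(`centered_comp_neg`), and its `m`-th coefficient vanishes because `N - m = h` is odd.
-/

/-- Stirling cycle number (unsigned Stirling number of the first kind):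
the coefficient of `x^k` in `x(x+1)⋯(x+n-1)`. -/
noncomputable def stirlingCycle (n k : ℕ) : ℕ := (ascPochhammer ℕ n).coeff k

open Polynomial in
/-- The centered polynomial `∏_{i=1}^N (x + i - (N+1)/2)` has the parity of `N`. -/
lemma centered_comp_neg (N : ℕ) :
    (taylor (-((N : ℚ) + 1) / 2) ((ascPochhammer ℚ N).comp (X + 1))).comp (-X) =
      C ((-1) ^ N) * taylor (-((N : ℚ) + 1) / 2) ((ascPochhammer ℚ N).comp (X + 1)) := by
  apply Polynomial.funext
  intro x
  simp only [eval_comp, taylor_eval, eval_mul, eval_C, eval_add, eval_X, eval_one, eval_neg]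
  have e : -x + -((N : ℚ) + 1) / 2 + 1 = -(x + ((N : ℚ) + 1) / 2 - 1) := by ring
  rw [e, ascPochhammer_eval_neg_eq_descPochhammer, descPochhammer_eval_eq_ascPochhammer]
  congr 2
  ring

open Polynomial in
lemma centered_coeff_eq_zero (N m : ℕ) (hodd : Odd (N + m)) :
    (taylor (-((N : ℚ) + 1) / 2) ((ascPochhammer ℚ N).comp (X + 1))).coeff m = 0 := by
  have key := congrArg (fun p => p.coeff m) (centered_comp_neg N)
  rw [show (-X : ℚ[X]) = C (-1) * X by simp] at key
  simp only [comp_C_mul_X_coeff, coeff_C_mul] at key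
  rcases Nat.even_or_odd N with hN | hN
  · have hm : Odd m := (Nat.odd_add'.mp hodd).mpr hN
    rw [hN.neg_one_pow, hm.neg_one_pow] at key
    linarith
  · have hm : Even m := (Nat.odd_add.mp hodd).mp hN
    rw [hN.neg_one_pow, hm.neg_one_pow] at key
    linarith

open Polynomial in
lemma stirlingCycle_succ_succ_cast (N k : ℕ) :
    (stirlingCycle (N + 1) (k + 1) : ℚ) = ((ascPochhammer ℚ N).comp (X + 1)).coeff k := by
  have e : (stirlingCycle (N + 1) (k + 1) : ℚ) = (ascPochhammer ℚ (N + 1)).coeff (k + 1) := by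
    rw [← ascPochhammer_map (Nat.castRingHom ℚ), coeff_map]
    rfl
  rw [e, ascPochhammer_succ_left, coeff_X_mul]

open Polynomial in
/-- Cancellation identity for Stirling cycle numbers: for `n ≥ 1` and odd `1 ≤ h ≤ n-1`,
`∑_{r=0}^h (-1)^r 2^{h-r} n^r C(n+r-h-1, n-h-1) ⟦n, n-h+r⟧ = 0`. -/
theorem central_cycle_band (n : ℕ) (hn : 1 ≤ n) (h : ℕ) (h1 : 1 ≤ h) (hh : h ≤ n - 1)
    (hodd : Odd h) :
    ∑ r ∈ Finset.range (h + 1),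
        (-1 : ℤ) ^ r * 2 ^ (h - r) * (n : ℤ) ^ r *
          ((n + r - h - 1).choose (n - h - 1) : ℤ) * (stirlingCycle n (n - h + r) : ℤ)
      = 0 := by
  obtain ⟨m, rfl⟩ : ∃ m, n = m + h + 1 := ⟨n - 1 - h, by omega⟩
  have hz := centered_coeff_eq_zero (m + h) m (by
    obtain ⟨k, rfl⟩ := hodd
    exact ⟨m + k, by ring⟩)
  have hdeg : (hasseDeriv m ((ascPochhammer ℚ (m + h)).comp (X + 1))).natDegree < h + 1 := by
    refine lt_of_le_of_lt (natDegree_hasseDeriv_le _ _) ?_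
    rw [natDegree_comp, ascPochhammer_natDegree, ← C_1, natDegree_X_add_C]
    omega
  rw [taylor_coeff, eval_eq_sum_range' hdeg] at hz
  have hz2 := congrArg (fun t => (2 : ℚ) ^ h * t) hz
  simp only [mul_zero, Finset.mul_sum] at hz2
  have goalQ : ((∑ r ∈ Finset.range (h + 1),
        (-1 : ℤ) ^ r * 2 ^ (h - r) * ((m + h + 1 : ℕ) : ℤ) ^ r *
          ((m + h + 1 + r - h - 1).choose (m + h + 1 - h - 1) : ℤ) *
          (stirlingCycle (m + h + 1) (m + h + 1 - h + r) : ℤ) : ℤ) : ℚ) = 0 := by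
    rw [← hz2, Int.cast_sum]
    refine Finset.sum_congr rfl fun r hr => ?_
    have hr' : r ≤ h := Nat.lt_succ_iff.mp (Finset.mem_range.mp hr)
    rw [show m + h + 1 + r - h - 1 = r + m by omega, show m + h + 1 - h - 1 = m by omega,
      show m + h + 1 - h + r = (r + m) + 1 by omega, hasseDeriv_coeff,
      ← stirlingCycle_succ_succ_cast, ← pow_sub_mul_pow (2 : ℚ) hr', div_pow,
      neg_pow (((m + h : ℕ) : ℚ) + 1)]
    push_cast
    field_simp
  exact_mod_cast goalQ
end

section
/- For every integer M ≥ 1 and every integer s with 0 ≤ s ≤ M, the following identity of integers holds: ∑_{r=0}^{M−s} (−1)^{r−M+s} · (M+1)^r · C(r+s, s) · ⟦M+1, r+s+1⟧ = ⟦M+1, s+1⟧, where C(·,·) denotes the binomial coefficient. -/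
open Polynomial

/-- The polynomial `(X + 1)(X + 2)⋯(X + M)` over `ℤ`. -/
noncomputable def shiftedProd (M : ℕ) : ℤ[X] := ∏ i ∈ Finset.range M, (X + C ((i : ℤ) + 1))

lemma ascPochhammer_succ_eq_X_mul_shiftedProd (M : ℕ) :
    ascPochhammer ℤ (M + 1) = X * shiftedProd M := by
  induction M with
  | zero => simp [shiftedProd]
  | succ M ih =>
    rw [ascPochhammer_succ_right, ih, shiftedProd, shiftedProd, Finset.prod_range_succ]
    simp [mul_assoc]

lemma stirlingCycle_succ_succ (M k : ℕ) :
    (stirlingCycle (M + 1) (k + 1) : ℤ) = (shiftedProd M).coeff k := by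
  rw [← coeff_X_mul, ← ascPochhammer_succ_eq_X_mul_shiftedProd,
    ← ascPochhammer_map (Nat.castRingHom ℤ), coeff_map]
  rfl

lemma shiftedProd_natDegree (M : ℕ) : (shiftedProd M).natDegree = M := by
  rw [shiftedProd, natDegree_prod_of_monic _ _ fun i _ => monic_X_add_C _]
  simp only [natDegree_X_add_C, Finset.sum_const, Finset.card_range, smul_eq_mul, mul_one]

/-- The reflection symmetry `P(-(X + M + 1)) = (-1)^M P(X)` of `P = (X + 1)⋯(X + M)`. -/
lemma shiftedProd_comp (M : ℕ) :
    (shiftedProd M).comp (-(X + C ((M : ℤ) + 1))) = C ((-1) ^ M) * shiftedProd M := by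
  have h : C ((-1 : ℤ) ^ M) = ∏ _i ∈ Finset.range M, (-1 : ℤ[X]) := by simp
  rw [h, shiftedProd, prod_comp, ← Finset.prod_range_reflect (fun i => X + C ((i : ℤ) + 1)),
    ← Finset.prod_mul_distrib]
  refine Finset.prod_congr rfl fun i hi => ?_
  have hi : i < M := Finset.mem_range.mp hi
  have hc : ((M - 1 - i : ℕ) : ℤ) = M - 1 - i := by omega
  simp only [hc, add_comp, X_comp, C_comp, map_add, map_sub, map_one, one_comp]
  ring

/-- The coefficient of `X^s` in `p(-(X + a))`, by the binomial theorem. -/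
lemma coeff_comp_neg_X_add_C (p : ℤ[X]) (a : ℤ) (s : ℕ) :
    (p.comp (-(X + C a))).coeff s =
      ∑ k ∈ Finset.range (p.natDegree + 1),
        p.coeff k * ((-1) ^ k * (a ^ (k - s) * (k.choose s : ℤ))) := by
  rw [comp, eval₂_eq_sum_range, finsetSum_coeff]
  refine Finset.sum_congr rfl fun k _ => ?_
  have h : (-(X + C a)) ^ k = C ((-1) ^ k) * (X + C a) ^ k := by
    rw [neg_pow]; simp
  rw [h, coeff_C_mul, coeff_C_mul, coeff_X_add_C_pow]

/-- Weighted binomial transform of Stirling cycle numbers: for `M ≥ 1` and `0 ≤ s ≤ M`,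
`∑_{r=0}^{M-s} (-1)^{r-M+s} (M+1)^r C(r+s,s) ⟦M+1, r+s+1⟧ = ⟦M+1, s+1⟧`
(the sign `(-1)^{r-M+s}` is written as `(-1)^{r+s+M}`, which is equal). -/
theorem integer_shift_cycle (M : ℕ) (hM : 1 ≤ M) (s : ℕ) (hs : s ≤ M) :
    ∑ r ∈ Finset.range (M - s + 1),
        (-1 : ℤ) ^ (r + s + M) * ((M : ℤ) + 1) ^ r * ((r + s).choose s : ℤ) *
          (stirlingCycle (M + 1) (r + s + 1) : ℤ)
      = (stirlingCycle (M + 1) (s + 1) : ℤ) := by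
  have key := congrArg (fun p => (-1 : ℤ) ^ M * p.coeff s) (shiftedProd_comp M)
  simp only [coeff_comp_neg_X_add_C, shiftedProd_natDegree, coeff_C_mul] at key
  rw [← mul_assoc, ← mul_pow, neg_one_mul, neg_neg, one_pow, one_mul] at key
  -- The terms with `k < s` vanish because `k.choose s = 0`; the others are `k = s + r`.
  have hsplit : M + 1 = s + (M - s + 1) := by omega
  rw [hsplit, Finset.sum_range_add, Finset.sum_eq_zero (s := Finset.range s), zero_add,
    Finset.mul_sum] at key
  · rw [stirlingCycle_succ_succ, ← key]
    refine Finset.sum_congr rfl fun r _ => ?_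
    rw [stirlingCycle_succ_succ, add_comm s r, Nat.add_sub_cancel, pow_add _ (r + s) M]
    ring
  · intro k hk
    rw [Nat.choose_eq_zero_of_lt (Finset.mem_range.mp hk)]
    simp
end

section
/- For every integer m ≥ 0, every integer k with 0 ≤ k ≤ m, and every real x: P_k(m,x) = ∑_{r=0}^{k} (−1)^{r−k} · x^r · C(r+m−k, m−k) · ⟦m+1, r+m−k+1⟧, where C(·,·) denotes the binomial coefficient. -/
open Polynomial in
/-- The polynomial `(X+1)(X+2)⋯(X+m)` over `ℝ`. -/
noncomputable def shiftedRising (m : ℕ) : ℝ[X] :=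
  ∏ i ∈ Finset.range m, (X + C ((i : ℝ) + 1))

open Polynomial in
theorem X_mul_shiftedRising (m : ℕ) : X * shiftedRising m = ascPochhammer ℝ (m + 1) := by
  induction m with
  | zero => simp [shiftedRising]
  | succ m ih =>
    rw [ascPochhammer_succ_right, ← ih, shiftedRising, Finset.prod_range_succ, ← shiftedRising]
    simp [mul_assoc]

theorem shiftedRising_coeff (m j : ℕ) :
    (shiftedRising m).coeff j = (stirlingCycle (m + 1) (j + 1) : ℝ) := by
  rw [← Polynomial.coeff_X_mul, X_mul_shiftedRising, stirlingCycle,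
    ← ascPochhammer_map (Nat.castRingHom ℝ), Polynomial.coeff_map]
  simp

theorem shiftedRising_natDegree (m : ℕ) : (shiftedRising m).natDegree = m := by
  rw [shiftedRising, Polynomial.natDegree_prod_of_monic _ _ fun i _ => Polynomial.monic_X_add_C _]
  simp only [Polynomial.natDegree_X_add_C, Finset.sum_const, Finset.card_range, smul_eq_mul,
    mul_one]

open Polynomial in
theorem taylor_shiftedRising (m : ℕ) (x : ℝ) :
    taylor (-x) (shiftedRising m) = ∏ i ∈ Finset.range m, (X + C ((i : ℝ) + 1 - x)) := by
  rw [taylor_apply, shiftedRising, prod_comp]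
  refine Finset.prod_congr rfl fun i _ => ?_
  simp only [add_comp, X_comp, C_comp, C_sub, C_add, C_neg]
  ring

/-- Explicit formula:
`P_k(m,x) = ∑_{r=0}^k (-1)^{r-k} x^r C(r+m-k, m-k) ⟦m+1, r+m-k+1⟧`
(the sign `(-1)^{r-k}` is written as `(-1)^{k-r}`, which is equal). -/
theorem P_explicit (m k : ℕ) (hk : k ≤ m) (x : ℝ) :
    P m (k : ℤ) x
      = ∑ r ∈ Finset.range (k + 1),
          (-1 : ℝ) ^ (k - r) * x ^ r * ((r + m - k).choose (m - k) : ℝ) *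
            (stirlingCycle (m + 1) (r + m - k + 1) : ℝ) := by
  have vieta := Finset.prod_X_add_C_coeff (Finset.range m) (fun i : ℕ => (i : ℝ) + 1 - x)
    (k := m - k) (by simp)
  rw [Finset.card_range, Nat.sub_sub_self hk, ← taylor_shiftedRising,
    Polynomial.taylor_coeff] at vieta
  have hdeg : (Polynomial.hasseDeriv (m - k) (shiftedRising m)).natDegree < k + 1 := by
    have := Polynomial.natDegree_hasseDeriv_le (shiftedRising m) (m - k)
    rw [shiftedRising_natDegree] at this
    omega
  rw [P, if_pos (Int.natCast_nonneg k), Int.toNat_natCast, ← vieta,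
    Polynomial.eval_eq_sum_range' hdeg, Finset.mul_sum]
  refine Finset.sum_congr rfl fun r hr => ?_
  have hr' : r ≤ k := Nat.lt_succ_iff.mp (Finset.mem_range.mp hr)
  rw [Polynomial.hasseDeriv_coeff, shiftedRising_coeff, Nat.add_sub_assoc hk r]
  -- `(-1)^k * (-x)^r = (-1)^(k-r) * x^r`, since the two factors `(-1)^r` cancel.
  have hsign : (-1 : ℝ) ^ k * (-x) ^ r = (-1) ^ (k - r) * x ^ r := by
    obtain ⟨d, rfl⟩ := Nat.exists_eq_add_of_le hr'
    rw [Nat.add_sub_cancel_left, neg_pow x, pow_add]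
    have : (-1 : ℝ) ^ r * (-1) ^ r = 1 := by rw [← mul_pow]; simp
    linear_combination (-1 : ℝ) ^ d * x ^ r * this
  rw [← hsign]
  ring
end

section
/- For all integers N ≥ 1 and 1 ≤ j ≤ N, let c_j be the number of weakly increasing N-tuples (k₁,…,k_N) of natural numbers such that k₁ = j, k_i ≥ i for every i with 1 ≤ i ≤ N, and k_N ≤ N. Then N · c_j = j · C(2N−j−1, N−1), where C(·,·) denotes the binomial coefficient. -/
/-!
Write `M` for the largest allowed value. Reading tuples from the right, let `t n e` be the number of
weakly increasing `n`-tuples taking only the `e` values `M + 1 - e, …, M` and whose `i`-th entry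
(counting from `0`) is at least `M + 1 - (n - i)`. Splitting by whether the first entry is the
smallest allowed value, and deleting that entry if it is, gives the Pascal-type recursion
`t (n + 1) (e + 1) = t (n + 1) e + t n (e + 1)` for `e ≤ n`, while `t (n + 1) (n + 2) =
t (n + 1) (n + 1)` because the staircase bound forbids the extra value. Hence
`t n (d + 1) = C(n + d, n) - C(n + d, n + 1)` for `d ≤ n` (`card_tails`), the ballot numbers.
Deleting the prescribed first entry `j` gives `c_j = t (N - 1) (N - j + 1)`, and the claim follows
from `(n + 1) C(n + d, n + 1) = d C(n + d, n)`.
-/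

open scoped Classical in
/-- Weakly increasing `n`-tuples with entries among the `e` largest elements of `{0, …, M}`, lying
above the staircase aligned at the right end: the last entry is `≥ M`, the one before `≥ M - 1`,
and so on. Both lower bounds are written additively to avoid truncated subtraction. -/
noncomputable def tails (M n e : ℕ) : Finset (Fin n → Fin (M + 1)) :=
  Finset.univ.filter fun f => Monotone f ∧
    ∀ i : Fin n, M + 1 ≤ (f i : ℕ) + e ∧ (i : ℕ) + M + 1 ≤ (f i : ℕ) + n

lemma mem_tails {M n e : ℕ} {f : Fin n → Fin (M + 1)} : f ∈ tails M n e ↔ Monotone f ∧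
    ∀ i : Fin n, M + 1 ≤ (f i : ℕ) + e ∧ (i : ℕ) + M + 1 ≤ (f i : ℕ) + n := by
  simp [tails]

/-- Deleting the first entry, when it is the smallest allowed value `M - e`, is a bijection. -/
lemma card_tails_first (M n e : ℕ) (hn : e ≤ n) (hM : e ≤ M) :
    ((tails M (n + 1) (e + 1)).filter fun f => (f 0 : ℕ) + e = M).card
      = (tails M n (e + 1)).card := by
  refine Finset.card_bij' (fun f _ => Fin.tail f)
    (fun g _ => Fin.cons (⟨M - e, by omega⟩ : Fin (M + 1)) g) ?_ ?_ ?_ ?_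
  · intro f hf
    simp only [Finset.mem_filter, mem_tails] at hf
    obtain ⟨⟨hm, hb⟩, -⟩ := hf
    refine mem_tails.2 ⟨fun a b hab => hm (Fin.succ_le_succ_iff.2 hab), fun i => ?_⟩
    have := hb i.succ
    simp only [Fin.val_succ] at this
    simp only [Fin.tail]
    omega
  · intro g hg
    obtain ⟨hm, hb⟩ := mem_tails.1 hg
    simp only [Finset.mem_filter, mem_tails]
    refine ⟨⟨?_, ?_⟩, ?_⟩
    · intro a b hab
      induction a using Fin.cases with
      | zero =>
        induction b using Fin.cases with
        | zero => exact le_rfl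
        | succ b =>
          have := hb b
          simp only [Fin.cons_zero, Fin.cons_succ, Fin.le_def]
          omega
      | succ a =>
        induction b using Fin.cases with
        | zero => exact absurd hab (by simp)
        | succ b => simpa using hm (Fin.succ_le_succ_iff.1 hab)
    · intro i
      induction i using Fin.cases with
      | zero =>
        simp only [Fin.cons_zero, Fin.val_zero]
        omega
      | succ i =>
        have := hb i
        simp only [Fin.cons_succ, Fin.val_succ]
        omega
    · simp only [Fin.cons_zero]
      omega
  · intro f hf
    have h := (Finset.mem_filter.1 hf).2
    have h0 : (⟨M - e, by omega⟩ : Fin (M + 1)) = f 0 := Fin.ext (by simp only; omega)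
    simp only [h0]
    exact Fin.cons_self_tail f
  · intro g _
    exact Fin.tail_cons _ _

lemma card_tails_succ (M n e : ℕ) (hn : e ≤ n) (hM : e ≤ M) :
    (tails M (n + 1) (e + 1)).card = (tails M (n + 1) e).card + (tails M n (e + 1)).card := by
  rw [← card_tails_first M n e hn hM,
    ← Finset.card_filter_add_card_filter_not (s := tails M (n + 1) (e + 1))
      (fun f => (f 0 : ℕ) + e = M), add_comm]
  congr 2
  ext f
  simp only [Finset.mem_filter, mem_tails]
  constructor
  · rintro ⟨⟨hm, hb⟩, h0⟩
    refine ⟨hm, fun i => ?_⟩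
    have h1 := hb 0
    have h2 := hb i
    have h3 : (f 0 : ℕ) ≤ f i := hm (Fin.zero_le i)
    omega
  · rintro ⟨hm, hb⟩
    have h1 := hb 0
    refine ⟨⟨hm, fun i => ?_⟩, by omega⟩
    have h2 := hb i
    omega

/-- Once all staircase values are available, enlarging the range of values changes nothing. -/
lemma tails_saturated (M n : ℕ) : tails M n (n + 1) = tails M n n := by
  ext f
  simp only [mem_tails]
  refine and_congr_right fun _ => forall_congr' fun i => ?_
  omega

lemma tails_zero_right (M n : ℕ) : tails M (n + 1) 0 = ∅ := by
  refine Finset.eq_empty_of_forall_notMem fun f hf => ?_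
  have h1 := (mem_tails.1 hf).2 0
  have h2 := (f 0).isLt
  omega

lemma card_tails_zero (M e : ℕ) : (tails M 0 e).card = 1 := by
  have : tails M 0 e = Finset.univ := by
    ext f
    simp only [mem_tails, Finset.mem_univ, iff_true]
    exact ⟨Subsingleton.monotone f, fun i => i.elim0⟩
  simp [this]

/-- The ballot numbers: `tails M n (d + 1)` has `C(n + d, n) - C(n + d, n + 1)` elements. -/
lemma card_tails (M n d : ℕ) (hn : d ≤ n) (hM : d ≤ M) :
    (tails M n (d + 1)).card + (n + d).choose (n + 1) = (n + d).choose n := by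
  induction n generalizing d with
  | zero =>
    obtain rfl : d = 0 := by omega
    simp [card_tails_zero]
  | succ n ih =>
    induction d with
    | zero =>
      have h := ih 0 (by omega) (by omega)
      rw [card_tails_succ M n 0 (by omega) hM, tails_zero_right]
      simpa using h
    | succ d ihd =>
      have h1 := ihd (by omega) (by omega)
      have e1 : n + 1 + (d + 1) = (n + 1 + d) + 1 := by ring
      have p1 := Nat.choose_succ_succ' (n + 1 + d) n
      have p2 := Nat.choose_succ_succ' (n + 1 + d) (n + 1)
      rw [e1]
      rcases Nat.lt_or_ge d n with hd | hd
      · have h2 := ih (d + 1) (by omega) (by omega)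
        rw [show n + (d + 1) = n + 1 + d by ring] at h2
        have h3 := card_tails_succ M n (d + 1) (by omega) hM
        omega
      · -- On the diagonal `d = n` the recursion degenerates; symmetry of the binomial row
        -- `2 * n + 1` replaces the induction hypothesis for `n`.
        obtain rfl : d = n := by omega
        have h3 := tails_saturated M (d + 1)
        have h4 : (d + 1 + d).choose d = (d + 1 + d).choose (d + 1) :=
          Nat.choose_symm_of_eq_add (by ring)
        rw [h3]
        omega

open scoped Classical in
/-- Staircase coefficients: if `c_j` is the number of weakly increasing `N`-tuples
`(k₁,…,k_N)` with `k₁ = j`, `k_i ≥ i` for all `i`, and `k_N ≤ N`, then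
`N · c_j = j · C(2N-j-1, N-1)`. -/
theorem staircase_coefficients (N : ℕ) (hN : 1 ≤ N) (j : ℕ) (hj1 : 1 ≤ j) (hjN : j ≤ N) :
    N * (Finset.univ.filter
        (fun f : Fin N → Fin (N + 1) => Monotone f ∧ (f ⟨0, hN⟩ : ℕ) = j
          ∧ ∀ i : Fin N, (i : ℕ) + 1 ≤ (f i : ℕ))).card
      = j * (2 * N - j - 1).choose (N - 1) := by
  obtain ⟨n, rfl⟩ : ∃ n, N = n + 1 := ⟨N - 1, by omega⟩
  obtain ⟨d, hd⟩ : ∃ d, n + 1 = j + d := ⟨n + 1 - j, by omega⟩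
  have hset : (Finset.univ.filter
        (fun f : Fin (n + 1) → Fin (n + 1 + 1) => Monotone f ∧ (f ⟨0, hN⟩ : ℕ) = j
          ∧ ∀ i : Fin (n + 1), (i : ℕ) + 1 ≤ (f i : ℕ)))
      = (tails (n + 1) (n + 1) (d + 1)).filter fun f => (f 0 : ℕ) + d = n + 1 := by
    ext f
    simp only [Finset.mem_filter, Finset.mem_univ, true_and, mem_tails]
    have hz : (⟨0, hN⟩ : Fin (n + 1)) = 0 := rfl
    rw [hz]
    constructor
    · rintro ⟨hm, h0, hb⟩
      refine ⟨⟨hm, fun i => ?_⟩, by omega⟩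
      have h2 := hb i
      have h3 : (f 0 : ℕ) ≤ f i := hm (Fin.zero_le i)
      omega
    · rintro ⟨⟨hm, hb⟩, h0⟩
      refine ⟨hm, by omega, fun i => ?_⟩
      have h2 := hb i
      omega
  rw [hset, card_tails_first _ _ _ (by omega) (by omega)]
  have h1 := card_tails (n + 1) n d (by omega) (by omega)
  have h2 := Nat.choose_succ_right_eq (n + d) n
  rw [Nat.add_sub_cancel_left] at h2
  rw [show 2 * (n + 1) - j - 1 = n + d by omega, Nat.add_sub_cancel]
  zify at h1 h2 hd ⊢
  linear_combination ((n : ℤ) + 1) * h1 - h2 + ((n + d).choose n : ℤ) * hd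
end

section
/- For every integer N ≥ 1: ∑_{j=1}^{N} j · C(2N−j−1, N−1) = N · catalan(N), where C(·,·) denotes the binomial coefficient and catalan(N) = C(2N, N)/(N+1) is the N-th Catalan number. -/
/-!
Put `N = n + 1`. After reversing the order of summation the left side is
`∑ i ≤ n, (n + 1 - i) * C(i + n, n)`, the double partial sum of the column
`C(i + n, n)` of Pascal's triangle, so two applications of the hockey-stick identity give
`C(2n + 2, n + 2)` (`sum_weighted_choose`). This equals `(n + 1) * catalan (n + 1)`, since
`(n + 2) * C(2n + 2, n + 2) = (n + 1) * C(2n + 2, n + 1)` and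
`C(2n + 2, n + 1) = (n + 2) * catalan (n + 1)`.
-/

/-- Iterated hockey-stick identity. -/
theorem sum_weighted_choose (n m : ℕ) :
    ∑ i ∈ Finset.range (m + 1), (m + 1 - i) * (i + n).choose n
      = (m + n + 2).choose (n + 2) := by
  induction m with
  | zero => simp
  | succ m ih =>
    -- Raising `m` by one adds one copy of each binomial coefficient in the column.
    have step : ∑ i ∈ Finset.range (m + 1 + 1), (m + 1 + 1 - i) * (i + n).choose n
        = ∑ i ∈ Finset.range (m + 1), (m + 1 - i) * (i + n).choose n
          + ∑ i ∈ Finset.range (m + 1 + 1), (i + n).choose n := by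
      rw [Finset.sum_range_succ, Finset.sum_range_succ _ (m + 1), ← add_assoc,
        ← Finset.sum_add_distrib]
      congr 1
      · refine Finset.sum_congr rfl fun i hi => ?_
        have hi := Finset.mem_range.mp hi
        rw [show m + 1 + 1 - i = (m + 1 - i) + 1 by omega]
        ring
      · simp
    rw [step, ih, Nat.sum_range_add_choose, show m + 1 + n + 2 = (m + n + 2) + 1 by ring,
      Nat.choose_succ_succ (m + n + 2) (n + 1), show m + 1 + n + 1 = m + n + 2 by ring, add_comm]

/-- Catalan sum: `∑_{j=1}^N j · C(2N-j-1, N-1) = N · catalan N`. -/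
theorem staircase_catalan_sum (N : ℕ) (hN : 1 ≤ N) :
    ∑ j ∈ Finset.Icc 1 N, j * (2 * N - j - 1).choose (N - 1) = N * catalan N := by
  obtain ⟨n, rfl⟩ : ∃ n, N = n + 1 := ⟨N - 1, by omega⟩
  have hsum : ∑ j ∈ Finset.Icc 1 (n + 1), j * (2 * (n + 1) - j - 1).choose (n + 1 - 1)
      = ∑ i ∈ Finset.range (n + 1), (n + 1 - i) * (i + n).choose n := by
    refine Finset.sum_bij' (fun j _ => n + 1 - j) (fun i _ => n + 1 - i) ?_ ?_ ?_ ?_ ?_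
    · intro j hj; simp only [Finset.mem_Icc, Finset.mem_range] at *; omega
    · intro j hj; simp only [Finset.mem_Icc, Finset.mem_range] at *; omega
    · intro j hj; simp only [Finset.mem_Icc] at *; omega
    · intro j hj; simp only [Finset.mem_range] at *; omega
    · intro j hj
      simp only [Finset.mem_Icc] at hj
      rw [show n + 1 - (n + 1 - j) = j by omega, Nat.add_sub_cancel,
        show 2 * (n + 1) - j - 1 = n + 1 - j + n by omega]
  rw [hsum, sum_weighted_choose]
  have hcat := succ_mul_catalan_eq_centralBinom (n + 1)
  have habs := Nat.choose_succ_right_eq (2 * (n + 1)) (n + 1)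
  rw [Nat.centralBinom_eq_two_mul_choose] at hcat
  rw [← hcat, show 2 * (n + 1) - (n + 1) = n + 1 by omega] at habs
  rw [show n + n + 2 = 2 * (n + 1) by ring]
  apply Nat.eq_of_mul_eq_mul_right (show 0 < n + 1 + 1 by omega)
  linarith
end

section
/- Let m ≥ 1 be a fixed integer. Then: (i) the function x ↦ (sech x − (sech x)^m/(2 − sech x))/x² is Lebesgue integrable on (0,∞); (ii) the series ∑_{r=0}^{∞} 2^{−r−1}·χ_{m+r} converges and equals ∫_{(0,∞)} (sech x − (sech x)^m/(2 − sech x))/x² dx; and (iii) the normalized partial sums (1/C(2N−m, N−m)) · ∑_{j=m}^{N} C(2N−j−1, N−j)·χ_j converge, as N → ∞, to the same integral, where C(·,·) denotes the binomial coefficient. -/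
/-!
With `s = sech x ∈ (0, 1]`, Bernoulli's inequality gives `0 ≤ s - s ^ n ≤ n * (s * (1 - s))` for
`n ≥ 1`, and `s * (1 - s) / x ^ 2` is integrable on `(0, ∞)` because `1 - s ≤ x ^ 2 / 2`
(`integrableOn_majorant`). Hence `0 ≤ χ_n ≤ n * G` with `G` the integral of that majorant.

The series identity is the pointwise geometric sum
`∑ 2 ^ (-r-1) * (s - s ^ (m+r)) = s - s ^ m / (2 - s)`, integrated term by term; the norms of the
terms are summable since `∑ 2 ^ (-r-1) * (m + r)` converges.

For the normalized sums, put `j = m + r`. The weight `weight m N r` of `χ_(m+r)` starts at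
`N / (2N - m)` and satisfies
`weight m N (r+1) = weight m N r * (N - m - r) / (2N - m - r - 1)`, where the ratio is at most `1/2`
(as `m + r ≥ 1`) and tends to `1/2` as `N → ∞`. So each weight tends to `2 ^ (-r-1)` and is bounded
by `2 ^ (-r)`, and Tannery's theorem identifies the limit with the sum of the series.
-/

open MeasureTheory

/-- Hyperbolic secant. -/
noncomputable def sech (x : ℝ) : ℝ := 1 / Real.cosh x

/-- The integral sequence `χ_n = ∫_0^∞ (sech x - sech^n x)/x² dx`. -/
noncomputable def chi (n : ℕ) : ℝ :=
  ∫ x in Set.Ioi (0 : ℝ), (sech x - (sech x) ^ n) / x ^ 2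
open Filter


/-! ### Integral estimates -/

lemma sech_pos (x : ℝ) : 0 < sech x := by
  unfold sech; have := Real.cosh_pos x; positivity

lemma sech_le_one (x : ℝ) : sech x ≤ 1 := by
  unfold sech
  rw [div_le_one (Real.cosh_pos x)]
  exact Real.one_le_cosh x

lemma one_sub_sech_le (x : ℝ) : 1 - sech x ≤ x ^ 2 / 2 := by
  have h1 : Real.exp (-(x ^ 2 / 2)) ≤ sech x := by
    unfold sech
    rw [Real.exp_neg, ← one_div]
    exact one_div_le_one_div_of_le (Real.cosh_pos x) (Real.cosh_le_exp_half_sq x)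
  have h2 := Real.add_one_le_exp (-(x ^ 2 / 2))
  linarith

lemma continuous_sech : Continuous sech := by
  unfold sech
  exact continuous_const.div Real.continuous_cosh fun x => (Real.cosh_pos x).ne'

/-- The common integrable majorant: every integrand below is at most a constant times it. -/
noncomputable def majorant (x : ℝ) : ℝ := sech x * (1 - sech x) / x ^ 2

lemma majorant_nonneg (x : ℝ) : 0 ≤ majorant x := by
  have h1 := sech_pos x
  have h2 : 0 ≤ 1 - sech x := by linarith [sech_le_one x]
  unfold majorant
  positivity

lemma integrableOn_majorant : IntegrableOn majorant (Set.Ioi 0) := by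
  have hd : IntegrableOn (fun x : ℝ => 2 * (1 + x ^ 2)⁻¹) (Set.Ioi 0) :=
    (integrable_inv_one_add_sq.const_mul 2).integrableOn
  refine Integrable.mono' hd ?_ ?_
  · have := continuous_sech.measurable
    unfold majorant
    exact Measurable.aestronglyMeasurable (by fun_prop)
  · filter_upwards [ae_restrict_mem measurableSet_Ioi] with x hx
    have hx : 0 < x := hx
    rw [Real.norm_of_nonneg (majorant_nonneg x), majorant, ← div_eq_mul_inv,
      div_le_div_iff₀ (by positivity) (by positivity)]
    have h1 := sech_pos x
    have h2 := sech_le_one x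
    have h3 := one_sub_sech_le x
    have h4 : sech x * (1 - sech x) ≤ 1 - sech x := by nlinarith
    have h5 : sech x * (1 - sech x) ≤ 1 := by nlinarith
    nlinarith [sq_nonneg x]

/-- Comparison with `majorant`, for integrands of the form `f x / x ^ 2`. -/
lemma integrableOn_of_le (f : ℝ → ℝ) (hf : Measurable f) (c : ℝ)
    (h0 : ∀ x, 0 ≤ f x) (h1 : ∀ x, f x ≤ c * (sech x * (1 - sech x))) :
    IntegrableOn (fun x => f x / x ^ 2) (Set.Ioi 0) ∧
      ∫ x in Set.Ioi (0 : ℝ), f x / x ^ 2 ≤ c * ∫ x in Set.Ioi (0 : ℝ), majorant x := by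
  have hle : ∀ x, f x / x ^ 2 ≤ c * majorant x := fun x => by
    rw [majorant, ← mul_div_assoc]
    exact div_le_div_of_nonneg_right (h1 x) (sq_nonneg x)
  have hint : IntegrableOn (fun x => f x / x ^ 2) (Set.Ioi 0) := by
    refine Integrable.mono' (integrableOn_majorant.const_mul c) ?_ ?_
    · exact Measurable.aestronglyMeasurable (by fun_prop)
    · refine Eventually.of_forall fun x => ?_
      rw [Real.norm_of_nonneg (div_nonneg (h0 x) (sq_nonneg x))]
      exact hle x
  refine ⟨hint, ?_⟩
  rw [← integral_const_mul]
  exact integral_mono hint (integrableOn_majorant.const_mul c) hle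

/-- Bernoulli's inequality, in the form that compares `s - s ^ n` with `s * (1 - s)`. -/
lemma pow_ge_of_bernoulli {s : ℝ} (h0 : 0 < s) {n : ℕ} (hn : 1 ≤ n) :
    s * (1 - (n - 1) * (1 - s)) ≤ s ^ n := by
  obtain ⟨k, rfl⟩ := Nat.exists_eq_add_of_le' hn
  have := one_add_mul_sub_le_pow (a := s) (by linarith) k
  rw [pow_succ']
  push_cast
  exact mul_le_mul_of_nonneg_left (by linarith) h0.le

lemma chi_facts {n : ℕ} (hn : 1 ≤ n) :
    IntegrableOn (fun x => (sech x - sech x ^ n) / x ^ 2) (Set.Ioi 0) ∧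
      chi n ≤ n * ∫ x in Set.Ioi (0 : ℝ), majorant x := by
  have := continuous_sech.measurable
  refine integrableOn_of_le (fun x => sech x - sech x ^ n) (by fun_prop) n ?_ ?_
  · intro x
    have := pow_le_of_le_one (sech_pos x).le (sech_le_one x) (Nat.one_le_iff_ne_zero.mp hn)
    linarith
  · intro x
    have h1 := pow_ge_of_bernoulli (sech_pos x) hn
    have h2 : 0 ≤ sech x * (1 - sech x) :=
      mul_nonneg (sech_pos x).le (by linarith [sech_le_one x])
    nlinarith

lemma integrand_nonneg {n : ℕ} (hn : 1 ≤ n) (x : ℝ) : 0 ≤ (sech x - sech x ^ n) / x ^ 2 := by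
  have := pow_le_of_le_one (sech_pos x).le (sech_le_one x) (Nat.one_le_iff_ne_zero.mp hn)
  exact div_nonneg (by linarith) (sq_nonneg x)

lemma chi_nonneg {n : ℕ} (hn : 1 ≤ n) : 0 ≤ chi n :=
  integral_nonneg fun x => integrand_nonneg hn x

lemma integrableOn_limit {m : ℕ} (hm : 1 ≤ m) :
    IntegrableOn (fun x : ℝ => (sech x - sech x ^ m / (2 - sech x)) / x ^ 2) (Set.Ioi 0) := by
  have := continuous_sech.measurable
  refine (integrableOn_of_le (fun x => sech x - sech x ^ m / (2 - sech x)) (by fun_prop) m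
    ?_ ?_).1
  · intro x
    have h0 := sech_pos x
    have h1 := sech_le_one x
    have := pow_le_of_le_one h0.le h1 (Nat.one_le_iff_ne_zero.mp hm)
    rw [sub_nonneg, div_le_iff₀ (by linarith)]
    nlinarith
  · intro x
    have h0 := sech_pos x
    have h1 := sech_le_one x
    have hB := pow_ge_of_bernoulli h0 hm
    have h2 : 0 ≤ sech x * (1 - sech x) * (1 - sech x) * m := by
      have : 0 ≤ 1 - sech x := by linarith
      positivity
    rw [sub_le_comm, le_div_iff₀ (by linarith)]
    nlinarith

/-! ### The series identity -/

lemma summable_bound (m : ℕ) (G : ℝ) :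
    Summable fun r : ℕ => (1 / 2 : ℝ) ^ r * (((m + r : ℕ) : ℝ) * G) := by
  have h1 := summable_pow_mul_geometric_of_norm_lt_one (R := ℝ) 1 (r := 1 / 2) (by norm_num)
  have h0 := summable_pow_mul_geometric_of_norm_lt_one (R := ℝ) 0 (r := 1 / 2) (by norm_num)
  refine ((h1.mul_right G).add (h0.mul_right (m * G))).congr fun r => ?_
  push_cast
  ring

lemma hasSum_pointwise (m : ℕ) (x : ℝ) :
    HasSum (fun r : ℕ => (1 : ℝ) / 2 ^ (r + 1) * ((sech x - sech x ^ (m + r)) / x ^ 2))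
      ((sech x - sech x ^ m / (2 - sech x)) / x ^ 2) := by
  have h0 := sech_pos x
  have h1 := sech_le_one x
  have ha := (hasSum_geometric_of_lt_one (r := (1 / 2 : ℝ)) (by norm_num)
    (by norm_num)).mul_left (sech x / 2)
  have hb := (hasSum_geometric_of_lt_one (r := sech x / 2) (by positivity)
    (by linarith)).mul_left (sech x ^ m / 2)
  have hval : (sech x - sech x ^ m / (2 - sech x)) / x ^ 2 =
      (sech x / 2 * (1 - 1 / 2)⁻¹ - sech x ^ m / 2 * (1 - sech x / 2)⁻¹) / x ^ 2 := by
    have h2 : 2 - sech x ≠ 0 := by linarith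
    rw [show 1 - sech x / 2 = (2 - sech x) / 2 by ring, inv_div]
    congr 1
    field_simp
    norm_num
  have hterm : (fun r : ℕ => (1 : ℝ) / 2 ^ (r + 1) * ((sech x - sech x ^ (m + r)) / x ^ 2)) =
      fun r : ℕ => (sech x / 2 * (1 / 2) ^ r - sech x ^ m / 2 * (sech x / 2) ^ r) / x ^ 2 := by
    funext r
    rw [pow_succ, div_pow, div_pow, one_pow]
    field_simp
    rw [pow_add]
  rw [hval, hterm]
  exact (ha.sub hb).div_const (x ^ 2)

lemma hasSum_chi {m : ℕ} (hm : 1 ≤ m) :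
    HasSum (fun r : ℕ => (1 : ℝ) / 2 ^ (r + 1) * chi (m + r))
      (∫ x in Set.Ioi (0 : ℝ), (sech x - (sech x) ^ m / (2 - sech x)) / x ^ 2) := by
  have hI : ∀ r : ℕ, ∫ x in Set.Ioi (0 : ℝ),
      (1 : ℝ) / 2 ^ (r + 1) * ((sech x - sech x ^ (m + r)) / x ^ 2)
        = (1 : ℝ) / 2 ^ (r + 1) * chi (m + r) := fun r => integral_const_mul _ _
  have key := hasSum_integral_of_summable_integral_norm (μ := volume.restrict (Set.Ioi (0 : ℝ)))
    (F := fun (r : ℕ) x => (1 : ℝ) / 2 ^ (r + 1) * ((sech x - sech x ^ (m + r)) / x ^ 2))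
    (fun r => (chi_facts (n := m + r) (by omega)).1.const_mul _) ?_
  · simp only [hI, (hasSum_pointwise m _).tsum_eq] at key
    exact key
  · have hn : ∀ (r : ℕ) (x : ℝ),
        ‖(1 : ℝ) / 2 ^ (r + 1) * ((sech x - sech x ^ (m + r)) / x ^ 2)‖
          = (1 : ℝ) / 2 ^ (r + 1) * ((sech x - sech x ^ (m + r)) / x ^ 2) := fun r x =>
      Real.norm_of_nonneg (mul_nonneg (by positivity) (integrand_nonneg (by omega) x))
    simp only [hn, hI]
    refine Summable.of_nonneg_of_le
      (fun r => mul_nonneg (by positivity) (chi_nonneg (by omega))) (fun r => ?_)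
      (summable_bound m (∫ x in Set.Ioi (0 : ℝ), majorant x))
    have hc := (chi_facts (n := m + r) (by omega)).2
    have hc0 := chi_nonneg (n := m + r) (by omega)
    refine mul_le_mul ?_ hc hc0 (by positivity)
    rw [div_pow, one_pow]
    exact one_div_le_one_div_of_le (by positivity) (pow_le_pow_right₀ (by norm_num) (by omega))

/-! ### The normalized binomial weights -/

/-- The coefficient of `χ_(m+r)` in the normalized sum of index `N`, extended by `0` to
`r > N - m`; the case distinction is needed because truncated subtraction would otherwise produce
spurious nonzero binomials. -/
noncomputable def weight (m N r : ℕ) : ℝ :=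
  if m + r ≤ N then
    ((2 * N - (m + r) - 1).choose (N - (m + r)) : ℝ) / ((2 * N - m).choose (N - m) : ℝ)
  else 0

lemma weight_nonneg (m N r : ℕ) : 0 ≤ weight m N r := by
  unfold weight; split_ifs <;> positivity

lemma weight_zero {m N : ℕ} (hm : 1 ≤ m) (hN : m ≤ N) :
    weight m N 0 = (N : ℝ) / (2 * N - m) := by
  obtain ⟨d, rfl⟩ := Nat.exists_eq_add_of_le hN
  have h := Nat.choose_mul_succ_eq (2 * (m + d) - m - 1) (m + d - m)
  rw [show 2 * (m + d) - m - 1 + 1 = 2 * (m + d) - m by omega,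
    show 2 * (m + d) - m - (m + d - m) = m + d by omega] at h
  have h' : ((2 * (m + d) - m - 1).choose (m + d - m) : ℝ) * (2 * (m + d) - m)
      = ((2 * (m + d) - m).choose (m + d - m) : ℝ) * (m + d) := by
    have := congrArg (Nat.cast : ℕ → ℝ) h
    rw [Nat.cast_mul, Nat.cast_mul, Nat.cast_sub (by omega)] at this
    push_cast at this
    exact this
  have hpos : (0 : ℝ) < ((2 * (m + d) - m).choose (m + d - m) : ℝ) := by
    exact_mod_cast Nat.choose_pos (by omega)
  have hm' : (1 : ℝ) ≤ m := by exact_mod_cast hm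
  have hd' : (0 : ℝ) ≤ d := by positivity
  rw [weight, if_pos (by omega), Nat.add_zero,
    div_eq_div_iff hpos.ne' (by push_cast; nlinarith)]
  push_cast
  rw [h']
  ring

lemma weight_succ {m N r : ℕ} (hN : m + r ≤ N) :
    weight m N (r + 1) = weight m N r * (((N : ℝ) - m - r) / (2 * N - m - r - 1)) := by
  obtain ⟨d, rfl⟩ := Nat.exists_eq_add_of_le hN
  rcases d with _ | d
  · rw [weight, if_neg (by omega)]
    push_cast
    ring
  · have h := Nat.add_one_mul_choose_eq (m + r + 2 * d) d
    have h' : ((m : ℝ) + r + 2 * d + 1) * ((m + r + 2 * d).choose d : ℝ)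
        = ((m + r + 2 * d + 1).choose (d + 1) : ℝ) * (d + 1) := by exact_mod_cast h
    have hpos : (0 : ℝ) < ((m : ℝ) + r + 2 * d + 1) := by positivity
    rw [weight, weight, if_pos (by omega), if_pos (by omega),
      show 2 * (m + r + (d + 1)) - (m + (r + 1)) - 1 = m + r + 2 * d by omega,
      show m + r + (d + 1) - (m + (r + 1)) = d by omega,
      show 2 * (m + r + (d + 1)) - (m + r) - 1 = m + r + 2 * d + 1 by omega,
      show m + r + (d + 1) - (m + r) = d + 1 by omega]
    have e1 : (((m + r + (d + 1) : ℕ) : ℝ) - m - r) = d + 1 := by push_cast; ring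
    have e2 : (2 * ((m + r + (d + 1) : ℕ) : ℝ) - m - r - 1) = m + r + 2 * d + 1 := by
      push_cast; ring
    rw [e1, e2, div_mul_div_comm, ← h', mul_comm (((m : ℝ) + r + 2 * d + 1)),
      mul_div_mul_right _ _ hpos.ne']

lemma weight_le {m N : ℕ} (hm : 1 ≤ m) (hN : m ≤ N) (r : ℕ) :
    weight m N r ≤ (1 / 2 : ℝ) ^ r := by
  have hm' : (1 : ℝ) ≤ m := by exact_mod_cast hm
  have hN' : (m : ℝ) ≤ N := by exact_mod_cast hN
  induction r with
  | zero =>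
    rw [weight_zero hm hN, pow_zero, div_le_one (by linarith)]
    linarith
  | succ r ih =>
    by_cases h : m + r ≤ N
    · have h' : (m : ℝ) + r ≤ N := by exact_mod_cast h
      have hr : (0 : ℝ) ≤ r := by positivity
      rw [weight_succ h, pow_succ]
      refine mul_le_mul ih ?_ ?_ (by positivity)
      -- The denominator vanishes only for `m = N = 1`, `r = 0`, where the quotient is `0`.
      · rcases eq_or_lt_of_le (show (0 : ℝ) ≤ 2 * N - m - r - 1 by linarith) with h0 | h0
        · rw [← h0, div_zero]; norm_num
        · rw [div_le_iff₀ h0]; linarith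
      · exact div_nonneg (by linarith) (by linarith)
    · rw [weight, if_neg (by omega)]
      positivity

lemma tendsto_weight {m : ℕ} (hm : 1 ≤ m) (r : ℕ) :
    Tendsto (fun N : ℕ => weight m N r) atTop (nhds ((1 : ℝ) / 2 ^ (r + 1))) := by
  -- Every ratio of affine functions of `N` with slopes `1` and `2` tends to `1 / 2`.
  have hlim : ∀ a b : ℝ, Tendsto (fun N : ℕ => ((N : ℝ) - a) / (2 * N - b)) atTop
      (nhds (1 / 2)) := by
    intro a b
    have hi : ∀ c : ℝ, Tendsto (fun N : ℕ => c / (N : ℝ)) atTop (nhds 0) := fun c =>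
      tendsto_const_div_atTop_nhds_zero_nat c
    have h := ((hi a).const_sub 1).div ((hi b).const_sub 2) (by norm_num)
    simp only [sub_zero] at h
    refine h.congr' ?_
    filter_upwards [eventually_gt_atTop 0] with N hN
    have hN' : (N : ℝ) ≠ 0 := by exact_mod_cast hN.ne'
    simp only [Pi.div_apply]
    rw [← mul_div_mul_right (1 - a / (N : ℝ)) (2 - b / N) hN', sub_mul, sub_mul,
      div_mul_cancel₀ _ hN', div_mul_cancel₀ _ hN', one_mul]
  induction r with
  | zero =>
    have h := hlim 0 m
    simp only [zero_add, pow_one]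
    refine h.congr' ?_
    filter_upwards [eventually_ge_atTop m] with N hN
    rw [weight_zero hm hN, sub_zero]
  | succ r ih =>
    have h := ih.mul (hlim (m + r) (m + r + 1))
    rw [show (1 : ℝ) / 2 ^ (r + 1) * (1 / 2) = 1 / 2 ^ (r + 1 + 1) by
      rw [pow_succ _ (r + 1)]; ring] at h
    refine h.congr' ?_
    filter_upwards [eventually_ge_atTop (m + r)] with N hN
    rw [weight_succ hN, sub_sub, sub_sub, sub_sub, add_assoc]

lemma normalized_sum_eq_tsum {m N : ℕ} (hN : m ≤ N) :
    (1 / ((2 * N - m).choose (N - m) : ℝ)) *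
        ∑ j ∈ Finset.Icc m N, ((2 * N - j - 1).choose (N - j) : ℝ) * chi j
      = ∑' r : ℕ, weight m N r * chi (m + r) := by
  rw [tsum_eq_sum (s := Finset.range (N + 1 - m)), Finset.mul_sum,
    ← Finset.Ico_add_one_right_eq_Icc, Finset.sum_Ico_eq_sum_range]
  · refine Finset.sum_congr rfl fun r hr => ?_
    rw [Finset.mem_range] at hr
    rw [weight, if_pos (by omega)]
    ring
  · intro r hr
    rw [Finset.mem_range] at hr
    rw [weight, if_neg (by omega), zero_mul]

/-- Normalized limiting identity for the common-lower-bound family. -/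
theorem common_normalized_limit (m : ℕ) (hm : 1 ≤ m) :
    IntegrableOn (fun x : ℝ =>
        (sech x - (sech x) ^ m / (2 - sech x)) / x ^ 2) (Set.Ioi 0)
    ∧ HasSum (fun r : ℕ => (1 : ℝ) / 2 ^ (r + 1) * chi (m + r))
        (∫ x in Set.Ioi (0 : ℝ), (sech x - (sech x) ^ m / (2 - sech x)) / x ^ 2)
    ∧ Tendsto (fun N : ℕ =>
        (1 / ((2 * N - m).choose (N - m) : ℝ)) *
          ∑ j ∈ Finset.Icc m N, ((2 * N - j - 1).choose (N - j) : ℝ) * chi j)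
      atTop
      (nhds (∫ x in Set.Ioi (0 : ℝ), (sech x - (sech x) ^ m / (2 - sech x)) / x ^ 2)) := by
  refine ⟨integrableOn_limit hm, hasSum_chi hm, ?_⟩
  rw [← (hasSum_chi hm).tsum_eq]
  have key := tendsto_tsum_of_dominated_convergence
    (f := fun N r => weight m N r * chi (m + r))
    (summable_bound m (∫ x in Set.Ioi (0 : ℝ), majorant x))
    (fun r => (tendsto_weight hm r).mul_const (chi (m + r))) ?_
  · refine key.congr' ?_
    filter_upwards [eventually_ge_atTop m] with N hN
    exact (normalized_sum_eq_tsum hN).symm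
  · filter_upwards [eventually_ge_atTop m] with N hN r
    have hc0 := chi_nonneg (n := m + r) (by omega)
    rw [Real.norm_of_nonneg (mul_nonneg (weight_nonneg m N r) hc0)]
    exact mul_le_mul (weight_le hm hN r) (chi_facts (n := m + r) (by omega)).2 hc0
      (by positivity)
end
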